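/- In any nondegenerate triangle, the distance from the centroid X2 to the symmedian point X6 and the distance from X2 to the Nagel point X8 satisfy (1/2)·dist(X2, X8) ≤ dist(X2, X6) ≤ ((4 + 3√2)/8)·dist(X2, X8). -/

import Mathlib

/-- The point with normalized barycentric coordinates `(x : y : z)`
with respect to the triangle `A B C`. -/
noncomputable def bary (A B C : EuclideanSpace ℝ (Fin 2)) (x y z : ℝ) :
    EuclideanSpace ℝ (Fin 2) :=
  (x + y + z)⁻¹ • (x • A + y • B + z • C)

/-- The triangle center with barycentric coordinates
`(f a b c : f b c a : f c a b)` where `a, b, c` are the side lengths. -/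
noncomputable def tcenter (f : ℝ → ℝ → ℝ → ℝ) (A B C : EuclideanSpace ℝ (Fin 2)) :
    EuclideanSpace ℝ (Fin 2) :=
  bary A B C (f (dist B C) (dist C A) (dist A B))
    (f (dist C A) (dist A B) (dist B C))
    (f (dist A B) (dist B C) (dist C A))

/-!
Let `G`, `I`, `K`, `N` be the centroid, incenter, symmedian point and Nagel point. Since
`N - G = -2 • (I - G)`, the claim is `GI ≤ GK ≤ (1 + 3√2/4) * GI`. In terms of the sides, `GI ^ 2`,
`GK ^ 2` and `⟪I - G, K - I⟫` are positive multiples of sums of Schur type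
`x (a - b) (a - c) + y (b - c) (b - a) + z (c - a) (c - b)`.

For the lower bound, the angle `GIK` is not acute because the third of these sums is nonnegative.

For the upper bound, write the sides as `m - d`, `m + d`, `c` with `c` the largest, and expand in
powers of `d`. The constant term is the isosceles case, where the ratio `GK / GI` is
`(m + c) * (2 * m + c) / (2 * m ^ 2 + c ^ 2)`, largest at `c = √2 * m` (the right isosceles
triangle). In the coefficients of `d ^ 2` the ratio `2` already suffices, and the terms of higher
order only lower `GK`.
-/

open scoped RealInnerProductSpace

section SchurSums

/-- The cyclic sum in the Vornicu–Schur inequality, with weights `x, y, z`. -/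
def schurSum {R : Type*} [CommRing R] (x y z a b c : R) : R :=
  x * ((a - b) * (a - c)) + y * ((b - c) * (b - a)) + z * ((c - a) * (c - b))

lemma schurSum_rotate {R : Type*} [CommRing R] (x y z a b c : R) :
    schurSum y z x b c a = schurSum x y z a b c := by
  unfold schurSum; ring

lemma schurSum_swap {R : Type*} [CommRing R] (x y z a b c : R) :
    schurSum y x z b a c = schurSum x y z a b c := by
  unfold schurSum; ring

lemma schurSum_nonneg {R : Type*} [CommRing R] [PartialOrder R] [IsOrderedRing R]
    {x y z a b c : R} (hx : 0 ≤ x) (hyx : y ≤ x) (hz : 0 ≤ z) (hab : a ≤ b) (hbc : b ≤ c) :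
    0 ≤ schurSum x y z a b c := by
  have regroup : schurSum x y z a b c =
      (x - y) * ((b - a) * (c - b)) + x * (b - a) ^ 2 + z * ((c - a) * (c - b)) := by
    unfold schurSum; ring
  have : 0 ≤ x - y := sub_nonneg.2 hyx
  have : 0 ≤ b - a := sub_nonneg.2 hab
  have : 0 ≤ c - b := sub_nonneg.2 hbc
  have : 0 ≤ c - a := sub_nonneg.2 (hab.trans hbc)
  rw [regroup]
  positivity

end SchurSums

section SideLengths

lemma of_rotate_of_last_max {α : Type*} [LinearOrder α] {p : α → α → α → Prop}
    (rotate : ∀ a b c, p a b c → p b c a) (last_max : ∀ a b c, a ≤ c → b ≤ c → p a b c)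
    (a b c : α) : p a b c := by
  rcases le_total a b with hab | hba
  · rcases le_total b c with hbc | hcb
    · exact last_max a b c (hab.trans hbc) hbc
    · exact rotate _ _ _ (last_max c a b hcb hab)
  · rcases le_total a c with hac | hca
    · exact last_max a b c hac (hba.trans hac)
    · exact rotate _ _ _ (rotate _ _ _ (last_max b c a hba hca))

/-- The weak triangle inequalities for three side lengths. -/
structure TriangleSides (a b c : ℝ) : Prop where
  le_add_left : a ≤ b + c
  le_add_mid : b ≤ c + a
  le_add_right : c ≤ a + b

namespace TriangleSides

variable {a b c : ℝ}

lemma rotate (h : TriangleSides a b c) : TriangleSides b c a :=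
  ⟨h.le_add_mid, h.le_add_right, h.le_add_left⟩

lemma swap (h : TriangleSides a b c) : TriangleSides b a c :=
  ⟨by linarith [h.le_add_mid], by linarith [h.le_add_left], by linarith [h.le_add_right]⟩

lemma nonneg_left (h : TriangleSides a b c) : 0 ≤ a := by
  linarith [h.le_add_mid, h.le_add_right]

end TriangleSides

lemma triangleSides_dist {X : Type*} [PseudoMetricSpace X] (A B C : X) :
    TriangleSides (dist B C) (dist C A) (dist A B) where
  le_add_left := by linarith [dist_triangle_right B C A, dist_comm A B, dist_comm A C]
  le_add_mid := by linarith [dist_triangle_right C A B, dist_comm B C, dist_comm A B]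
  le_add_right := by linarith [dist_triangle_right A B C, dist_comm A C, dist_comm B C]

lemma sum_dist_pos {X : Type*} [MetricSpace X] {A B C : X} (h : ¬(A = B ∧ B = C)) :
    0 < dist B C + dist C A + dist A B := by
  rcases not_and_or.1 h with h | h <;> have := dist_pos.2 h <;> positivity

lemma sum_dist_sq_pos {X : Type*} [MetricSpace X] {A B C : X} (h : ¬(A = B ∧ B = C)) :
    0 < dist B C ^ 2 + dist C A ^ 2 + dist A B ^ 2 := by
  rcases not_and_or.1 h with h | h <;> have := dist_pos.2 h <;> positivity

end SideLengths

section SideForms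

/-- The form with `9 (a + b + c) * GI ^ 2 = incenterForm a b c`, for `G` the centroid and `I` the
incenter of a triangle with sides `a, b, c`. -/
def incenterForm (a b c : ℝ) : ℝ :=
  schurSum (b + c - a) (c + a - b) (a + b - c) a b c

/-- The form with `9 (a ^ 2 + b ^ 2 + c ^ 2) ^ 2 * GK ^ 2 = symmedianForm a b c`, for `G` the
centroid and `K` the symmedian point of a triangle with sides `a, b, c`. -/
def symmedianForm (a b c : ℝ) : ℝ :=
  schurSum (2 * (b ^ 2 + c ^ 2) - a ^ 2) (2 * (c ^ 2 + a ^ 2) - b ^ 2)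
    (2 * (a ^ 2 + b ^ 2) - c ^ 2) (a ^ 2) (b ^ 2) (c ^ 2)

/-- The form with `6 (a + b + c) (a ^ 2 + b ^ 2 + c ^ 2) * ⟪I - G, K - I⟫ = angleForm a b c`, for
`G`, `I`, `K` the centroid, incenter and symmedian point of a triangle with sides `a, b, c`. -/
def angleForm (a b c : ℝ) : ℝ :=
  schurSum (a * (b + c) * (b + c - a)) (b * (c + a) * (c + a - b)) (c * (a + b) * (a + b - c)) a b c

lemma angleForm_rotate (a b c : ℝ) : angleForm b c a = angleForm a b c :=
  schurSum_rotate ..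

lemma angleForm_swap (a b c : ℝ) : angleForm b a c = angleForm a b c := by
  unfold angleForm
  rw [← schurSum_swap, add_comm c a, add_comm c b, add_comm b a]

lemma angleForm_nonneg_of_le {a b c : ℝ} (h : TriangleSides a b c) (hab : a ≤ b) (hbc : b ≤ c) :
    0 ≤ angleForm a b c := by
  have ha := h.nonneg_left
  have hb := h.rotate.nonneg_left
  have hc := h.rotate.rotate.nonneg_left
  have hx : 0 ≤ b + c - a := sub_nonneg.2 h.le_add_left
  have hz : 0 ≤ a + b - c := sub_nonneg.2 h.le_add_right
  have weight_sub : a * (b + c) * (b + c - a) - b * (c + a) * (c + a - b) =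
      (b - a) * (c * (a + b - c) + 2 * a * b) := by ring
  have : 0 ≤ b - a := sub_nonneg.2 hab
  refine schurSum_nonneg (by positivity) (sub_nonneg.1 ?_) (by positivity) hab hbc
  rw [weight_sub]
  positivity

lemma angleForm_nonneg {a b c : ℝ} (h : TriangleSides a b c) : 0 ≤ angleForm a b c := by
  revert h
  refine of_rotate_of_last_max (p := fun a b c ↦ TriangleSides a b c → 0 ≤ angleForm a b c)
    (fun a b c ih h ↦ ?_) (fun a b c hac hbc h ↦ ?_) a b c
  · rw [angleForm_rotate]
    exact ih h.rotate.rotate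
  · rcases le_total a b with hab | hba
    · exact angleForm_nonneg_of_le h hab hbc
    · rw [← angleForm_swap]
      exact angleForm_nonneg_of_le h.swap hba hac

lemma incenterForm_rotate (a b c : ℝ) : incenterForm b c a = incenterForm a b c :=
  schurSum_rotate ..

lemma symmedianForm_rotate (a b c : ℝ) : symmedianForm b c a = symmedianForm a b c :=
  schurSum_rotate ..

lemma incenterForm_sub_add (m d c : ℝ) :
    incenterForm (m - d) (m + d) c =
      (c - m) ^ 2 * (2 * m - c) + (13 * c - 10 * m) * d ^ 2 := by
  unfold incenterForm schurSum; ring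

lemma symmedianForm_sub_add_le {m d c : ℝ} (hd : 4 * d ^ 2 ≤ c ^ 2) :
    symmedianForm (m - d) (m + d) c ≤
      (c - m) ^ 2 * (2 * m - c) * ((m + c) ^ 2 * (2 * m + c)) +
        (6 * c ^ 4 + 66 * m ^ 2 * c ^ 2 - 36 * m ^ 4) * d ^ 2 := by
  have expand : symmedianForm (m - d) (m + d) c =
      (c - m) ^ 2 * (2 * m - c) * ((m + c) ^ 2 * (2 * m + c)) +
        (6 * c ^ 4 + 66 * m ^ 2 * c ^ 2 - 36 * m ^ 4) * d ^ 2 -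
        (8 * c ^ 2 + 36 * m ^ 2 + (c ^ 2 - 4 * d ^ 2)) * d ^ 4 := by
    unfold symmedianForm schurSum; ring
  have : 0 ≤ c ^ 2 - 4 * d ^ 2 := sub_nonneg.2 hd
  rw [expand]
  exact sub_le_self _ (by positivity)

lemma add_mul_two_mul_add_le (m c : ℝ) :
    (m + c) * (2 * m + c) ≤ (1 + 3 * √2 / 4) * (2 * m ^ 2 + c ^ 2) := by
  have gap : (1 + 3 * √2 / 4) * (2 * m ^ 2 + c ^ 2) - (m + c) * (2 * m + c) =
      3 * √2 / 4 * (c - √2 * m) ^ 2 := by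
    linear_combination (3 / 2 * m * c - 3 / 4 * √2 * m ^ 2) * Real.sq_sqrt zero_le_two
  rw [← sub_nonneg, gap]
  positivity

-- Compares the coefficients of `d ^ 2` in the expansions at the sides `m - d`, `m + d`, `c`.
lemma sq_coeff_le {m c : ℝ} (hm : 0 ≤ m) (hmc : m ≤ c) :
    (2 * m + c) * (6 * c ^ 4 + 66 * m ^ 2 * c ^ 2 - 36 * m ^ 4) ≤
      4 * (13 * c - 10 * m) * (2 * m ^ 2 + c ^ 2) ^ 2 := by
  obtain ⟨e, he, rfl⟩ : ∃ e, 0 ≤ e ∧ c = m + e := ⟨c - m, sub_nonneg.2 hmc, by ring⟩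
  have gap : 4 * (13 * (m + e) - 10 * m) * (2 * m ^ 2 + (m + e) ^ 2) ^ 2 -
      (2 * m + (m + e)) * (6 * (m + e) ^ 4 + 66 * m ^ 2 * (m + e) ^ 2 - 36 * m ^ 4) =
      46 * e ^ 5 + 178 * m * e ^ 4 + 394 * m ^ 2 * e ^ 3 + 282 * m ^ 3 * e ^ 2 +
        108 * m ^ 4 * e := by ring
  rw [← sub_nonneg, gap]
  positivity

lemma four_le_one_add_three_mul_sqrt_two_div_four_sq : 4 ≤ (1 + 3 * √2 / 4) ^ 2 := by
  have : 4 / 3 ≤ √2 := Real.le_sqrt_of_sq_le (by norm_num)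
  nlinarith

lemma mul_symmedianForm_sub_add_le {m d c : ℝ} (hm : 0 ≤ m) (hmc : m ≤ c) (hcm : c ≤ 2 * m)
    (hd : 4 * d ^ 2 ≤ c ^ 2) :
    (2 * m + c) * symmedianForm (m - d) (m + d) c ≤
      (1 + 3 * √2 / 4) ^ 2 * (incenterForm (m - d) (m + d) c * (2 * m ^ 2 + c ^ 2) ^ 2) := by
  have hc : 0 ≤ c := hm.trans hmc
  have : 0 ≤ 2 * m - c := sub_nonneg.2 hcm
  have hcoeff : 0 ≤ 13 * c - 10 * m := by linarith
  have isosceles :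
      ((m + c) * (2 * m + c)) ^ 2 ≤ ((1 + 3 * √2 / 4) * (2 * m ^ 2 + c ^ 2)) ^ 2 :=
    pow_le_pow_left₀ (by positivity) (add_mul_two_mul_add_le m c) 2
  have quadratic : (2 * m + c) * (6 * c ^ 4 + 66 * m ^ 2 * c ^ 2 - 36 * m ^ 4) ≤
      (1 + 3 * √2 / 4) ^ 2 * ((13 * c - 10 * m) * (2 * m ^ 2 + c ^ 2) ^ 2) := calc
    _ ≤ 4 * ((13 * c - 10 * m) * (2 * m ^ 2 + c ^ 2) ^ 2) :=
      (sq_coeff_le hm hmc).trans_eq (mul_assoc ..)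
    _ ≤ _ :=
      mul_le_mul_of_nonneg_right four_le_one_add_three_mul_sqrt_two_div_four_sq (by positivity)
  calc (2 * m + c) * symmedianForm (m - d) (m + d) c
      ≤ (2 * m + c) * ((c - m) ^ 2 * (2 * m - c) * ((m + c) ^ 2 * (2 * m + c)) +
        (6 * c ^ 4 + 66 * m ^ 2 * c ^ 2 - 36 * m ^ 4) * d ^ 2) := by
        gcongr
        exact symmedianForm_sub_add_le hd
    _ = (c - m) ^ 2 * (2 * m - c) * ((m + c) * (2 * m + c)) ^ 2 +
        (2 * m + c) * (6 * c ^ 4 + 66 * m ^ 2 * c ^ 2 - 36 * m ^ 4) * d ^ 2 := by ring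
    _ ≤ (c - m) ^ 2 * (2 * m - c) * ((1 + 3 * √2 / 4) * (2 * m ^ 2 + c ^ 2)) ^ 2 +
        (1 + 3 * √2 / 4) ^ 2 * ((13 * c - 10 * m) * (2 * m ^ 2 + c ^ 2) ^ 2) * d ^ 2 := by
        gcongr
    _ = (1 + 3 * √2 / 4) ^ 2 *
        (incenterForm (m - d) (m + d) c * (2 * m ^ 2 + c ^ 2) ^ 2) := by
        rw [incenterForm_sub_add]; ring

lemma incenterForm_sub_add_nonneg {m d c : ℝ} (hm : 0 ≤ m) (hmc : m ≤ c) (hcm : c ≤ 2 * m) :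
    0 ≤ incenterForm (m - d) (m + d) c := by
  have : 0 ≤ 2 * m - c := sub_nonneg.2 hcm
  have hcoeff : 0 ≤ 13 * c - 10 * m := by linarith
  rw [incenterForm_sub_add]
  positivity

lemma mul_symmedianForm_le_of_last_max {a b c : ℝ} (h : TriangleSides a b c) (hac : a ≤ c)
    (hbc : b ≤ c) :
    (a + b + c) * symmedianForm a b c ≤
      (1 + 3 * √2 / 4) ^ 2 * (incenterForm a b c * (a ^ 2 + b ^ 2 + c ^ 2) ^ 2) := by
  obtain ⟨m, d, rfl, rfl⟩ : ∃ m d, a = m - d ∧ b = m + d :=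
    ⟨(a + b) / 2, (b - a) / 2, by ring, by ring⟩
  have hm : 0 ≤ m := by linarith [h.nonneg_left, h.rotate.nonneg_left]
  have hmc : m ≤ c := by linarith
  have hcm : c ≤ 2 * m := by linarith [h.le_add_right]
  have hd : 4 * d ^ 2 ≤ c ^ 2 := by
    nlinarith [h.le_add_left, h.le_add_mid]
  calc (m - d + (m + d) + c) * symmedianForm (m - d) (m + d) c
      = (2 * m + c) * symmedianForm (m - d) (m + d) c := by ring
    _ ≤ (1 + 3 * √2 / 4) ^ 2 * (incenterForm (m - d) (m + d) c * (2 * m ^ 2 + c ^ 2) ^ 2) :=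
        mul_symmedianForm_sub_add_le hm hmc hcm hd
    _ ≤ _ := by
        gcongr
        · exact incenterForm_sub_add_nonneg hm hmc hcm
        · linarith [sq_nonneg d]

lemma mul_symmedianForm_le {a b c : ℝ} (h : TriangleSides a b c) :
    (a + b + c) * symmedianForm a b c ≤
      (1 + 3 * √2 / 4) ^ 2 * (incenterForm a b c * (a ^ 2 + b ^ 2 + c ^ 2) ^ 2) := by
  revert h
  refine of_rotate_of_last_max (p := fun a b c ↦ TriangleSides a b c →
    (a + b + c) * symmedianForm a b c ≤
      (1 + 3 * √2 / 4) ^ 2 * (incenterForm a b c * (a ^ 2 + b ^ 2 + c ^ 2) ^ 2))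
    (fun a b c ih h ↦ ?_) (fun a b c hac hbc h ↦ mul_symmedianForm_le_of_last_max h hac hbc) a b c
  rw [symmedianForm_rotate, incenterForm_rotate, show b + c + a = a + b + c by ring,
    show b ^ 2 + c ^ 2 + a ^ 2 = a ^ 2 + b ^ 2 + c ^ 2 by ring]
  exact ih h.rotate.rotate

end SideForms

section TriangleCenters

lemma centerMass_sub_centerMass {ι 𝕜 E : Type*} [Field 𝕜] [AddCommGroup E] [Module 𝕜 E]
    (s : Finset ι) (w₁ w₂ : ι → 𝕜) (p : ι → E) :
    s.centerMass w₁ p - s.centerMass w₂ p =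
      ∑ i ∈ s, (w₁ i / ∑ j ∈ s, w₁ j - w₂ i / ∑ j ∈ s, w₂ j) • p i := by
  simp only [Finset.centerMass, Finset.smul_sum, smul_smul, ← Finset.sum_sub_distrib, ← sub_smul,
    div_eq_inv_mul]

variable {V : Type*} [NormedAddCommGroup V]

section Centers

variable [NormedSpace ℝ V]

/-- The triangle center with barycentric coordinates `(f a b c : f b c a : f c a b)`, where `a`,
`b`, `c` are the side lengths of a triangle in an arbitrary normed space. It has the junk value `0`
when the three coordinates sum to `0`, as they may when the vertices coincide. -/
noncomputable def triangleCenter (f : ℝ → ℝ → ℝ → ℝ) (A B C : V) : V :=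
  Finset.univ.centerMass
    ![f (dist B C) (dist C A) (dist A B), f (dist C A) (dist A B) (dist B C),
      f (dist A B) (dist B C) (dist C A)] ![A, B, C]

/-- The centroid X2 of a triangle. -/
noncomputable abbrev centroidPoint (A B C : V) : V := triangleCenter (fun _ _ _ ↦ 1) A B C

/-- The incenter X1 of a triangle. -/
noncomputable abbrev incenterPoint (A B C : V) : V := triangleCenter (fun a _ _ ↦ a) A B C

/-- The symmedian point X6 of a triangle. -/
noncomputable abbrev symmedianPoint (A B C : V) : V := triangleCenter (fun a _ _ ↦ a ^ 2) A B C

/-- The Nagel point X8 of a triangle. -/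
noncomputable abbrev nagelPoint (A B C : V) : V := triangleCenter (fun a b c ↦ b + c - a) A B C

lemma tcenter_eq_triangleCenter (f : ℝ → ℝ → ℝ → ℝ) (A B C : EuclideanSpace ℝ (Fin 2)) :
    tcenter f A B C = triangleCenter f A B C := by
  simp [tcenter, bary, triangleCenter, Finset.centerMass, Fin.sum_univ_three]

lemma nagelPoint_sub_centroidPoint {A B C : V} (h : ¬(A = B ∧ B = C)) :
    nagelPoint A B C - centroidPoint A B C =
      (-2 : ℝ) • (incenterPoint A B C - centroidPoint A B C) := by
  have hs := (sum_dist_pos h).ne'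
  have nagel_sum : ∀ a b c : ℝ, b + c - a + (c + a - b) + (a + b - c) = a + b + c := by
    intros; ring
  simp only [triangleCenter, centerMass_sub_centerMass, Fin.sum_univ_three, Matrix.cons_val,
    nagel_sum]
  match_scalars <;> field_simp <;> ring

lemma dist_centroidPoint_nagelPoint {A B C : V} (h : ¬(A = B ∧ B = C)) :
    dist (centroidPoint A B C) (nagelPoint A B C) =
      2 * dist (centroidPoint A B C) (incenterPoint A B C) := by
  rw [dist_comm, dist_eq_norm, nagelPoint_sub_centroidPoint h, norm_smul, ← dist_eq_norm,
    dist_comm]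
  norm_num

end Centers

variable [InnerProductSpace ℝ V]

lemma inner_centerMass_sub_centerMass {ι : Type*} {s : Finset ι} {w₁ w₂ w₃ w₄ : ι → ℝ} (p : ι → V)
    (h₁ : ∑ i ∈ s, w₁ i ≠ 0) (h₂ : ∑ i ∈ s, w₂ i ≠ 0) (h₃ : ∑ i ∈ s, w₃ i ≠ 0)
    (h₄ : ∑ i ∈ s, w₄ i ≠ 0) :
    ⟪s.centerMass w₁ p - s.centerMass w₂ p, s.centerMass w₃ p - s.centerMass w₄ p⟫ =
      (-∑ i ∈ s, ∑ j ∈ s, (w₁ i / ∑ k ∈ s, w₁ k - w₂ i / ∑ k ∈ s, w₂ k) *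
        (w₃ j / ∑ k ∈ s, w₃ k - w₄ j / ∑ k ∈ s, w₄ k) * dist (p i) (p j) ^ 2) / 2 := by
  have sum_eq_zero {u v : ι → ℝ} (hu : ∑ i ∈ s, u i ≠ 0) (hv : ∑ i ∈ s, v i ≠ 0) :
      ∑ i ∈ s, (u i / ∑ k ∈ s, u k - v i / ∑ k ∈ s, v k) = 0 := by
    rw [Finset.sum_sub_distrib, ← Finset.sum_div, ← Finset.sum_div, div_self hu, div_self hv,
      sub_self]
  rw [centerMass_sub_centerMass, centerMass_sub_centerMass,
    inner_sum_smul_sum_smul_of_sum_eq_zero p (sum_eq_zero h₁ h₂) p (sum_eq_zero h₃ h₄)]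
  simp only [dist_eq_norm, sq]

lemma sum_triple_ne_zero {x y z : ℝ} (h : x + y + z ≠ 0) : ∑ i, ![x, y, z] i ≠ 0 := by
  simpa only [Fin.sum_univ_three, Matrix.cons_val] using h

lemma dist_sq_centroidPoint_incenterPoint {A B C : V} (h : ¬(A = B ∧ B = C)) :
    dist (centroidPoint A B C) (incenterPoint A B C) ^ 2 =
      incenterForm (dist B C) (dist C A) (dist A B) /
        (9 * (dist B C + dist C A + dist A B)) := by
  have hG := sum_triple_ne_zero (show (1 + 1 + 1 : ℝ) ≠ 0 by norm_num)
  have hs := (sum_dist_pos h).ne'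
  have hI := sum_triple_ne_zero hs
  rw [dist_eq_norm, ← real_inner_self_eq_norm_sq]
  simp only [triangleCenter]
  rw [inner_centerMass_sub_centerMass _ hG hI hG hI]
  simp only [Fin.sum_univ_three, Matrix.cons_val, dist_self, dist_comm B A, dist_comm A C,
    dist_comm C B, incenterForm, schurSum]
  field_simp
  ring

lemma dist_sq_centroidPoint_symmedianPoint {A B C : V} (h : ¬(A = B ∧ B = C)) :
    dist (centroidPoint A B C) (symmedianPoint A B C) ^ 2 =
      symmedianForm (dist B C) (dist C A) (dist A B) /
        (9 * (dist B C ^ 2 + dist C A ^ 2 + dist A B ^ 2) ^ 2) := by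
  have hG := sum_triple_ne_zero (show (1 + 1 + 1 : ℝ) ≠ 0 by norm_num)
  have hq := (sum_dist_sq_pos h).ne'
  have hK := sum_triple_ne_zero hq
  rw [dist_eq_norm, ← real_inner_self_eq_norm_sq]
  simp only [triangleCenter]
  rw [inner_centerMass_sub_centerMass _ hG hK hG hK]
  simp only [Fin.sum_univ_three, Matrix.cons_val, dist_self, dist_comm B A, dist_comm A C,
    dist_comm C B, symmedianForm, schurSum]
  field_simp
  ring

lemma inner_incenterPoint_sub_centroidPoint_symmedianPoint_sub_incenterPoint {A B C : V}
    (h : ¬(A = B ∧ B = C)) :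
    ⟪incenterPoint A B C - centroidPoint A B C, symmedianPoint A B C - incenterPoint A B C⟫ =
      angleForm (dist B C) (dist C A) (dist A B) /
        (6 * (dist B C + dist C A + dist A B) *
          (dist B C ^ 2 + dist C A ^ 2 + dist A B ^ 2)) := by
  have hG := sum_triple_ne_zero (show (1 + 1 + 1 : ℝ) ≠ 0 by norm_num)
  have hs := (sum_dist_pos h).ne'
  have hI := sum_triple_ne_zero hs
  have hq := (sum_dist_sq_pos h).ne'
  have hK := sum_triple_ne_zero hq
  simp only [triangleCenter]
  rw [inner_centerMass_sub_centerMass _ hI hG hK hI]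
  simp only [Fin.sum_univ_three, Matrix.cons_val, dist_self, dist_comm B A, dist_comm A C,
    dist_comm C B, angleForm, schurSum]
  field_simp
  ring

lemma norm_le_norm_of_inner_sub_nonneg {x y : V} (h : 0 ≤ ⟪x, y - x⟫) : ‖x‖ ≤ ‖y‖ := by
  refine (sq_le_sq₀ (norm_nonneg x) (norm_nonneg y)).1 ?_
  calc ‖x‖ ^ 2 ≤ ‖x‖ ^ 2 + 2 * ⟪x, y - x⟫ + ‖y - x‖ ^ 2 := by linarith [sq_nonneg ‖y - x‖]
    _ = ‖y‖ ^ 2 := by rw [← norm_add_sq_real, add_sub_cancel]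

theorem dist_centroidPoint_incenterPoint_le_dist_symmedianPoint {A B C : V} (h : ¬(A = B ∧ B = C)) :
    dist (centroidPoint A B C) (incenterPoint A B C) ≤
      dist (centroidPoint A B C) (symmedianPoint A B C) := by
  have hs := sum_dist_pos h
  have hq := sum_dist_sq_pos h
  rw [dist_comm, dist_eq_norm, dist_comm, dist_eq_norm]
  apply norm_le_norm_of_inner_sub_nonneg
  rw [sub_sub_sub_cancel_right,
    inner_incenterPoint_sub_centroidPoint_symmedianPoint_sub_incenterPoint h]
  exact div_nonneg (angleForm_nonneg (triangleSides_dist A B C)) (by positivity)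

theorem dist_centroidPoint_symmedianPoint_le_mul_dist_incenterPoint {A B C : V}
    (h : ¬(A = B ∧ B = C)) :
    dist (centroidPoint A B C) (symmedianPoint A B C) ≤
      (1 + 3 * √2 / 4) * dist (centroidPoint A B C) (incenterPoint A B C) := by
  have hs := sum_dist_pos h
  have hq := sum_dist_sq_pos h
  refine (sq_le_sq₀ dist_nonneg (by positivity)).1 ?_
  rw [mul_pow, dist_sq_centroidPoint_symmedianPoint h, dist_sq_centroidPoint_incenterPoint h,
    mul_div_assoc', div_le_div_iff₀ (by positivity) (by positivity)]
  linarith [mul_symmedianForm_le (triangleSides_dist A B C)]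

end TriangleCenters

theorem stmt_11_general {V : Type*} [NormedAddCommGroup V] [InnerProductSpace ℝ V] {A B C : V}
    (h : ¬(A = B ∧ B = C)) :
    1 / 2 * dist (centroidPoint A B C) (nagelPoint A B C) ≤
        dist (centroidPoint A B C) (symmedianPoint A B C) ∧
      dist (centroidPoint A B C) (symmedianPoint A B C) ≤
        (4 + 3 * √2) / 8 * dist (centroidPoint A B C) (nagelPoint A B C) := by
  rw [dist_centroidPoint_nagelPoint h]
  constructor
  · linarith [dist_centroidPoint_incenterPoint_le_dist_symmedianPoint h]
  · linarith [dist_centroidPoint_symmedianPoint_le_mul_dist_incenterPoint h]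

theorem stmt_11 (A B C : EuclideanSpace ℝ (Fin 2))
    (h : AffineIndependent ℝ ![A, B, C]) :
    (1/2) * dist (tcenter (fun a b c => (1:Real)) A B C) (tcenter (fun a b c => b + c - a) A B C) ≤ dist (tcenter (fun a b c => (1:Real)) A B C) (tcenter (fun a b c => a^2) A B C) ∧
      dist (tcenter (fun a b c => (1:Real)) A B C) (tcenter (fun a b c => a^2) A B C) ≤ ((4 + 3 * Real.sqrt 2)/8) * dist (tcenter (fun a b c => (1:Real)) A B C) (tcenter (fun a b c => b + c - a) A B C) := by
  simp only [tcenter_eq_triangleCenter]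
  exact stmt_11_general fun hABC ↦
    absurd (h.injective.eq_iff.1 hABC.1 : (0 : Fin 3) = 1) (by decide)
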